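/- Let k ≥ 3, t ≥ 1, n ≥ 2, and let c be an equinumerous t-coloring of [t·n]. Then the number of arithmetic progressions of length k contained in [t·n] that are not rainbow with respect to c is at most t · C(k, 2) · C(n, 2). -/

import Mathlib

/-- `c` is an equinumerous `t`-coloring of `[t*n] = {1, ..., t*n}`:
each color class `c⁻¹(i)` for `i ∈ {1, ..., t}` has exactly `n` elements. -/
def EquinumerousColoring (t n : ℕ) (c : ℕ → ℕ) : Prop :=
  ∀ i, 1 ≤ i → i ≤ t → ((Finset.Icc 1 (t * n)).filter (fun x => c x = i)).card = n

/-- The arithmetic progression with first term `a`, common difference `d` and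
length `k` is rainbow with respect to the coloring `c`. -/
def RainbowAP (k : ℕ) (c : ℕ → ℕ) (a d : ℕ) : Prop :=
  ∀ i < k, ∀ j < k, c (a + i * d) = c (a + j * d) → i = j

/-- The set of arithmetic progressions of length `k` contained in `[m]` that
are not rainbow with respect to `c`, encoded as pairs `(a, d)`. -/
def NonRainbowAPSet (m k : ℕ) (c : ℕ → ℕ) : Set (ℕ × ℕ) :=
  {p | 1 ≤ p.1 ∧ 1 ≤ p.2 ∧ p.1 + (k - 1) * p.2 ≤ m ∧ ¬ RainbowAP k c p.1 p.2}

lemma pair_eq_of_lt {i j i' j' : ℕ} (h : i < j) (h' : i' < j')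
    (e : ({i, j} : Finset ℕ) = {i', j'}) : i = i' ∧ j = j' := by
  have h1 : i ∈ ({i', j'} : Finset ℕ) := by rw [← e]; simp
  have h2 : j ∈ ({i', j'} : Finset ℕ) := by rw [← e]; simp
  have h3 : i' ∈ ({i, j} : Finset ℕ) := by rw [e]; simp
  have h4 : j' ∈ ({i, j} : Finset ℕ) := by rw [e]; simp
  simp only [Finset.mem_insert, Finset.mem_singleton] at h1 h2 h3 h4
  omega

/-- Every element of `[t*n]` has a color in `{1, ..., t}`. -/
lemma color_mem {t n : ℕ} {c : ℕ → ℕ} (hc : EquinumerousColoring t n c) {x : ℕ}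
    (hx : x ∈ Finset.Icc 1 (t * n)) : c x ∈ Finset.Icc 1 t := by
  have hcard : ((Finset.Icc 1 (t * n)).filter (fun x => c x ∈ Finset.Icc 1 t)).card = t * n := by
    have hmaps : Set.MapsTo c
        ((Finset.Icc 1 (t * n)).filter (fun x => c x ∈ Finset.Icc 1 t) : Finset ℕ)
        (Finset.Icc 1 t : Finset ℕ) :=
      fun y hy => (Finset.mem_filter.1 (Finset.mem_coe.1 hy)).2
    rw [Finset.card_eq_sum_card_fiberwise hmaps]
    rw [Finset.sum_congr rfl (g := fun _ => n)]
    · simp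
    · intro i hi
      rw [Finset.filter_filter]
      have hi' := Finset.mem_Icc.1 hi
      refine Eq.trans ?_ (hc i hi'.1 hi'.2)
      congr 1
      ext y
      simp only [Finset.mem_filter]
      constructor
      · rintro ⟨a, -, b⟩; exact ⟨a, b⟩
      · rintro ⟨a, b⟩; exact ⟨a, b ▸ hi, b⟩
  have heq := Finset.eq_of_subset_of_card_le (Finset.filter_subset
    (fun x => c x ∈ Finset.Icc 1 t) (Finset.Icc 1 (t * n))) (by rw [hcard]; simp)
  rw [← heq] at hx
  exact (Finset.mem_filter.1 hx).2

/-- For `k ≥ 3`, `t ≥ 1`, `n ≥ 2` and an equinumerous `t`-coloring `c` of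
`[t*n]`, the number of length-`k` arithmetic progressions in `[t*n]` that
are not rainbow with respect to `c` is at most `t * C(k,2) * C(n,2)`. -/
theorem card_nonrainbow_le (k t n : ℕ) (c : ℕ → ℕ) (hk : 3 ≤ k) (ht : 1 ≤ t)
    (hn : 2 ≤ n) (hc : EquinumerousColoring t n c) :
    (NonRainbowAPSet (t * n) k c).ncard ≤ t * k.choose 2 * n.choose 2 := by
  have hex : ∀ p : ℕ × ℕ, ∃ i j : ℕ, p ∈ NonRainbowAPSet (t * n) k c →
      i < j ∧ j < k ∧ c (p.1 + i * p.2) = c (p.1 + j * p.2) := by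
    intro p
    by_cases hp : p ∈ NonRainbowAPSet (t * n) k c
    · have h := hp.2.2.2
      unfold RainbowAP at h
      push Not at h
      obtain ⟨i, hi, j, hj, e, hne⟩ := h
      rcases lt_or_gt_of_ne hne with h | h
      · exact ⟨i, j, fun _ => ⟨h, hj, e⟩⟩
      · exact ⟨j, i, fun _ => ⟨h, hi, e.symm⟩⟩
    · exact ⟨0, 0, fun h => absurd h hp⟩
  choose I J hIJ using hex
  let T : Finset (Σ _ : ℕ, Finset ℕ × Finset ℕ) := (Finset.Icc 1 t).sigma fun q =>
    (Finset.range k).powersetCard 2 ×ˢ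
      ((Finset.Icc 1 (t * n)).filter (fun x => c x = q)).powersetCard 2
  have hT : T.card = t * k.choose 2 * n.choose 2 := by
    rw [Finset.card_sigma, Finset.sum_congr rfl (g := fun _ => k.choose 2 * n.choose 2)]
    · simp [mul_assoc]
    · intro q hq
      have hq' := Finset.mem_Icc.1 hq
      rw [Finset.card_product, Finset.card_powersetCard, Finset.card_powersetCard,
        hc q hq'.1 hq'.2, Finset.card_range]
  rw [← hT, ← Set.ncard_coe_finset]
  refine Set.ncard_le_ncard_of_injOn (fun p => ⟨c (p.1 + I p * p.2),
    ({I p, J p}, {p.1 + I p * p.2, p.1 + J p * p.2})⟩) ?_ ?_ T.finite_toSet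
  · intro p hp
    obtain ⟨hlt, hJ, he⟩ := hIJ p hp
    obtain ⟨h1, h2, h3, -⟩ := hp
    have hm : ∀ i < k, p.1 + i * p.2 ∈ Finset.Icc 1 (t * n) := by
      intro i hi
      have : i * p.2 ≤ (k - 1) * p.2 := Nat.mul_le_mul_right _ (by omega)
      rw [Finset.mem_Icc]
      omega
    have hmul : I p * p.2 < J p * p.2 := Nat.mul_lt_mul_of_pos_right hlt h2
    simp only [T, Finset.mem_coe, Finset.mem_sigma, Finset.mem_product, Finset.mem_powersetCard]
    refine ⟨color_mem hc (hm _ (hlt.trans hJ)), ⟨?_, Finset.card_pair hlt.ne⟩, ?_,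
      Finset.card_pair (by omega)⟩
    · intro x hx
      simp only [Finset.mem_insert, Finset.mem_singleton] at hx
      rw [Finset.mem_range]
      omega
    · intro x hx
      simp only [Finset.mem_insert, Finset.mem_singleton] at hx
      rw [Finset.mem_filter]
      rcases hx with rfl | rfl
      · exact ⟨hm _ (hlt.trans hJ), rfl⟩
      · exact ⟨hm _ hJ, he.symm⟩
  · intro p hp p' hp' e
    obtain ⟨hlt, -, -⟩ := hIJ p hp
    obtain ⟨hlt', -, -⟩ := hIJ p' hp'
    have hmul : I p * p.2 < J p * p.2 := Nat.mul_lt_mul_of_pos_right hlt hp.2.1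
    have hmul' : I p' * p'.2 < J p' * p'.2 := Nat.mul_lt_mul_of_pos_right hlt' hp'.2.1
    have e2 := congrArg (fun s : (Σ _ : ℕ, Finset ℕ × Finset ℕ) => s.2) e
    obtain ⟨ea, eb⟩ := Prod.mk.inj e2
    obtain ⟨hi, hj⟩ := pair_eq_of_lt hlt hlt' ea
    obtain ⟨hx, hy⟩ := pair_eq_of_lt (by omega) (by omega) eb
    rw [← hi] at hx
    rw [← hj] at hy
    obtain ⟨m, hm⟩ := Nat.exists_eq_add_of_lt hlt
    have hd : p.2 = p'.2 := by
      rw [hm] at hy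
      have : (m + 1) * p.2 = (m + 1) * p'.2 := by nlinarith
      exact Nat.eq_of_mul_eq_mul_left (by omega) this
    rw [hd] at hx
    exact Prod.ext (by omega) hd
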